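/- arXiv:2506.02320 — 6 statements merged into one kernel-verified Lean document; each statement's English description precedes it below -/
import Mathlib

section
/- Let M and P be N×N complex matrices with P² = P and P M = M P, and let g : ℝ → ℂᴺ be continuous. (i) If φ′, φ″ : ℝ → ℂᴺ are differentiable, satisfy dφ′/dx = P(Mφ′ + g) and dφ″/dx = (I−P)(Mφ″ + g) on ℝ, and at some point x₀ satisfy P φ′(x₀) = φ′(x₀) and P φ″(x₀) = 0, then φ = φ′ + φ″ satisfies dφ/dx = Mφ + g on ℝ. (ii) Conversely, if φ : ℝ → ℂᴺ is differentiable and satisfies dφ/dx = Mφ + g, then Pφ satisfies d(Pφ)/dx = P(M(Pφ) + g) and (I−P)φ satisfies d((I−P)φ)/dx = (I−P)(M((I−P)φ) + g). -/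
open Matrix

/-- A constant matrix commutes with differentiation of vector-valued functions. -/
theorem Matrix.hasDerivAt_mulVec {m n : Type*} [Fintype m] [Fintype n]
    (A : Matrix m n ℂ) {f : ℝ → n → ℂ} {f' : n → ℂ} {x : ℝ} (hf : HasDerivAt f f' x) :
    HasDerivAt (fun y => A *ᵥ f y) (A *ᵥ f') x :=
  (A.mulVecLin.restrictScalars ℝ).toContinuousLinearMap.hasFDerivAt.comp_hasDerivAt x hf

/-- If `Q * A = 0`, then `Q *ᵥ f` is constant along any `f` whose derivative lies in the range
of `A`; in particular it vanishes everywhere once it vanishes at a point. -/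
theorem Matrix.mulVec_eq_zero_of_hasDerivAt {l m n : Type*} [Fintype l] [Fintype m] [Fintype n]
    {Q : Matrix l m ℂ} {A : Matrix m n ℂ} (hQA : Q * A = 0) {f : ℝ → m → ℂ} {h : ℝ → n → ℂ}
    (hf : ∀ x, HasDerivAt f (A *ᵥ h x) x) {x₀ : ℝ} (h₀ : Q *ᵥ f x₀ = 0) (x : ℝ) :
    Q *ᵥ f x = 0 := by
  have hd (y : ℝ) : HasDerivAt (fun y => Q *ᵥ f y) 0 y := by
    simpa [mulVec_mulVec, hQA] using Q.hasDerivAt_mulVec (hf y)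
  rw [← h₀]
  exact is_const_of_deriv_eq_zero (fun y => (hd y).differentiableAt) (fun y => (hd y).deriv) x x₀

/-- An idempotent `Q` commuting with `M` maps solutions of `dφ/dx = Mφ + g` to solutions of the
projected equation. -/
theorem Matrix.hasDerivAt_mulVec_of_commute_idempotent {n : Type*} [Fintype n]
    {M Q : Matrix n n ℂ} (hQ : Q * Q = Q) (hQM : Q * M = M * Q) {g φ : ℝ → n → ℂ} {x : ℝ}
    (hφ : HasDerivAt φ (M *ᵥ φ x + g x) x) :
    HasDerivAt (fun y => Q *ᵥ φ y) (Q *ᵥ (M *ᵥ (Q *ᵥ φ x) + g x)) x := by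
  convert Q.hasDerivAt_mulVec hφ using 1
  rw [mulVec_add, mulVec_add, mulVec_mulVec, mulVec_mulVec, mulVec_mulVec, hQM, mul_assoc, hQ]

/-- Consistency of the exact one-way projection equations with the global
equation.  Let `P² = P`, `P M = M P` and `g` continuous.
(i) If `φ′`, `φ″` solve the one-way equations `dφ′/dx = P(Mφ′ + g)` and
`dφ″/dx = (I−P)(Mφ″ + g)` on `ℝ` and at some point `x₀` satisfy `P φ′(x₀) = φ′(x₀)` and
`P φ″(x₀) = 0`, then `φ = φ′ + φ″` solves the global equation `dφ/dx = Mφ + g` on `ℝ`.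
(ii) Conversely, if `φ` solves the global equation, then `Pφ` and `(I−P)φ` solve the
respective one-way equations. -/
theorem owns_exact_projection_consistency
    (N : ℕ) (M P : Matrix (Fin N) (Fin N) ℂ)
    (hP2 : P * P = P) (hPM : P * M = M * P)
    (g : ℝ → Fin N → ℂ) (hg : Continuous g) :
    ((∀ φ' φ'' : ℝ → Fin N → ℂ,
        (∀ x : ℝ, HasDerivAt φ' (P.mulVec (M.mulVec (φ' x) + g x)) x) →
        (∀ x : ℝ, HasDerivAt φ'' ((1 - P).mulVec (M.mulVec (φ'' x) + g x)) x) →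
        (∃ x₀ : ℝ, P.mulVec (φ' x₀) = φ' x₀ ∧ P.mulVec (φ'' x₀) = 0) →
        ∀ x : ℝ, HasDerivAt (fun y => φ' y + φ'' y)
          (M.mulVec (φ' x + φ'' x) + g x) x)
      ∧
      (∀ φ : ℝ → Fin N → ℂ,
        (∀ x : ℝ, HasDerivAt φ (M.mulVec (φ x) + g x) x) →
        (∀ x : ℝ, HasDerivAt (fun y => P.mulVec (φ y))
            (P.mulVec (M.mulVec (P.mulVec (φ x)) + g x)) x)
        ∧
        (∀ x : ℝ, HasDerivAt (fun y => (1 - P).mulVec (φ y))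
            ((1 - P).mulVec (M.mulVec ((1 - P).mulVec (φ x)) + g x)) x))) := by
  have hQ2 : (1 - P) * (1 - P) = 1 - P := by
    simp [sub_mul, mul_sub, hP2]
  have hQM : (1 - P) * M = M * (1 - P) := by
    rw [sub_mul, mul_sub, hPM, one_mul, mul_one]
  refine ⟨?_, fun φ hφ => ⟨fun x => hasDerivAt_mulVec_of_commute_idempotent hP2 hPM (hφ x),
    fun x => hasDerivAt_mulVec_of_commute_idempotent hQ2 hQM (hφ x)⟩⟩
  rintro φ' φ'' h' h'' ⟨x₀, h₀', h₀''⟩ x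
  have hP' : P *ᵥ φ' x = φ' x := by
    have := mulVec_eq_zero_of_hasDerivAt (Q := 1 - P) (by simp [sub_mul, hP2]) h'
      (x₀ := x₀) (by simp [sub_mulVec, h₀']) x
    rw [sub_mulVec, one_mulVec, sub_eq_zero] at this
    exact this.symm
  have hP'' : P *ᵥ φ'' x = 0 :=
    mulVec_eq_zero_of_hasDerivAt (by simp [mul_sub, hP2]) h'' h₀'' x
  have hPM' : P *ᵥ (M *ᵥ φ' x) = M *ᵥ φ' x := by
    rw [mulVec_mulVec, hPM, ← mulVec_mulVec, hP']
  have hPM'' : P *ᵥ (M *ᵥ φ'' x) = 0 := by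
    rw [mulVec_mulVec, hPM, ← mulVec_mulVec, hP'', mulVec_zero]
  refine ((h' x).fun_add (h'' x)).congr_deriv ?_
  simp only [sub_mulVec, one_mulVec, mulVec_add, hPM', hPM'']
  abel
end

section
/- Let N = N₊ + N₋ with 1 ≤ N₊ ≤ N₋, α₁,…,α_N ∈ ℂ, and let V be an invertible N×N complex matrix with blocks V₊₊, V₊₋, V₋₊, V₋₋ where V₊₊, V₋₋ are invertible; set A = V₊₊⁻¹V₊₋, B = V₋₋⁻¹V₋₊, E = diag(1,…,1,0,…,0) with N₊ ones, and P = V E V⁻¹. (i) If α_m ≠ α_n for all downstream m (1 ≤ m ≤ N₊) and upstream n (N₊+1 ≤ n ≤ N), then with N_β = N₊, β₊^{m−1} = α_m for m = 1,…,N₊, and any β₋⁰,…,β₋^{N₊−1} with β₋ʲ ≠ α_k for all k, the resulting matrix R⁻¹ = fromBlocks(I₊₊, F₊₊AF₋₋⁻¹; F₋₋⁻¹BF₊₊, I₋₋) (with F_k = ∏_{j=0}^{N₊−1}(α_k−β₊ʲ)/(α_k−β₋ʲ)) equals I, and hence P_{N_β} = V R E R⁻¹ V⁻¹ = P. (ii)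 Conversely, if α_{m̃} = α_{ñ} for some downstream m̃ and upstream ñ and the (ñ−N₊, m̃) entry of B is nonzero, then for every N_β and every choice of recursion parameters with α_k ≠ β₊ʲ and α_k ≠ β₋ʲ for all k, j, one has R⁻¹ ≠ I. -/
open Matrix

/-- Minimal recursion-parameter set for exact OWNS-P convergence (case
`N₊ ≤ N₋`).  (i) If the downstream and upstream eigenvalues are distinct, then taking
`N_β = N₊`, `β₊ʲ = α_{j+1}` (the downstream eigenvalues) and any `β₋ʲ` avoiding all
eigenvalues, the block matrix `R⁻¹` equals `I` and hence `P_{N_β} = V R E R⁻¹ V⁻¹ = P`.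
(ii) Conversely, if some downstream and upstream eigenvalues coincide and the corresponding
entry of `B = V₋₋⁻¹V₋₊` is nonzero, then `R⁻¹ ≠ I` for every choice of recursion
parameters avoiding the eigenvalues. -/
theorem ownsP_minimal_parameter_set
    (np nm : ℕ) (hnp : 1 ≤ np) (hnpm : np ≤ nm)
    (α : Fin np ⊕ Fin nm → ℂ)
    (V : Matrix (Fin np ⊕ Fin nm) (Fin np ⊕ Fin nm) ℂ) (hV : IsUnit V.det)
    (hVpp : IsUnit (V.toBlocks₁₁).det) (hVmm : IsUnit (V.toBlocks₂₂).det)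
    (A : Matrix (Fin np) (Fin nm) ℂ) (hA : A = (V.toBlocks₁₁)⁻¹ * V.toBlocks₁₂)
    (B : Matrix (Fin nm) (Fin np) ℂ) (hB : B = (V.toBlocks₂₂)⁻¹ * V.toBlocks₂₁)
    (E : Matrix (Fin np ⊕ Fin nm) (Fin np ⊕ Fin nm) ℂ)
    (hE : E = Matrix.fromBlocks (1 : Matrix (Fin np) (Fin np) ℂ) 0 0
      (0 : Matrix (Fin nm) (Fin nm) ℂ))
    (P : Matrix (Fin np ⊕ Fin nm) (Fin np ⊕ Fin nm) ℂ) (hP : P = V * E * V⁻¹) :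
    -- (i)
    ((∀ (m : Fin np) (n : Fin nm), α (Sum.inl m) ≠ α (Sum.inr n)) →
      ∀ βm : Fin np → ℂ, (∀ (j : Fin np) (k : Fin np ⊕ Fin nm), βm j ≠ α k) →
        let F : Fin np ⊕ Fin nm → ℂ :=
          fun k => ∏ j : Fin np, (α k - α (Sum.inl j)) / (α k - βm j)
        let Rinv : Matrix (Fin np ⊕ Fin nm) (Fin np ⊕ Fin nm) ℂ :=
          Matrix.fromBlocks 1
            (Matrix.diagonal (fun i => F (Sum.inl i)) * A *
              (Matrix.diagonal (fun i => F (Sum.inr i)))⁻¹)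
            ((Matrix.diagonal (fun i => F (Sum.inr i)))⁻¹ * B *
              Matrix.diagonal (fun i => F (Sum.inl i))) 1
        Rinv = 1 ∧ V * Rinv⁻¹ * E * Rinv * V⁻¹ = P)
    ∧
    -- (ii)
    (∀ (m' : Fin np) (n' : Fin nm), α (Sum.inl m') = α (Sum.inr n') → B n' m' ≠ 0 →
      ∀ (Nβ : ℕ) (βp βm : Fin Nβ → ℂ),
        (∀ (k : Fin np ⊕ Fin nm) (j : Fin Nβ), α k ≠ βp j ∧ α k ≠ βm j) →
        let F : Fin np ⊕ Fin nm → ℂ :=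
          fun k => ∏ j : Fin Nβ, (α k - βp j) / (α k - βm j)
        let Rinv : Matrix (Fin np ⊕ Fin nm) (Fin np ⊕ Fin nm) ℂ :=
          Matrix.fromBlocks 1
            (Matrix.diagonal (fun i => F (Sum.inl i)) * A *
              (Matrix.diagonal (fun i => F (Sum.inr i)))⁻¹)
            ((Matrix.diagonal (fun i => F (Sum.inr i)))⁻¹ * B *
              Matrix.diagonal (fun i => F (Sum.inl i))) 1
        Rinv ≠ 1) := by
  refine ⟨fun _ βm _ => ?_, fun m' n' _ hBne Nβ βp βm hβ => ?_⟩
  · intro F Rinv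
    have hF : Matrix.diagonal (fun i => F (Sum.inl i)) = 0 := by
      rw [Matrix.diagonal_eq_zero]
      funext i
      exact Finset.prod_eq_zero (Finset.mem_univ i) (by simp)
    have hR : Rinv = 1 := by
      simp only [Rinv, hF, Matrix.zero_mul, Matrix.mul_zero, Matrix.fromBlocks_one]
    exact ⟨hR, by simp [hR, hP]⟩
  · intro F Rinv hR
    have hF : ∀ k, F k ≠ 0 := fun k => Finset.prod_ne_zero_iff.mpr fun j _ =>
      div_ne_zero (sub_ne_zero.mpr (hβ k j).1) (sub_ne_zero.mpr (hβ k j).2)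
    have hdet : IsUnit (Matrix.diagonal (fun i => F (Sum.inr i))).det := by
      rw [Matrix.det_diagonal]
      exact (Finset.prod_ne_zero_iff.mpr fun i _ => hF (Sum.inr i)).isUnit
    have hblock : (Matrix.diagonal (fun i => F (Sum.inr i)))⁻¹ *
        (B * Matrix.diagonal (fun i => F (Sum.inl i))) = 0 := by
      rw [← Matrix.mul_assoc]
      exact (Matrix.fromBlocks_inj.mp (hR.trans Matrix.fromBlocks_one.symm)).2.2.1
    have hzero : B * Matrix.diagonal (fun i => F (Sum.inl i)) = 0 := by
      rw [← Matrix.mul_nonsing_inv_cancel_left _ (B * _) hdet, hblock, Matrix.mul_zero]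
    have hentry := congrFun (congrFun hzero n') m'
    rw [Matrix.mul_diagonal] at hentry
    exact mul_ne_zero hBne (hF (Sum.inl m')) hentry
end

section
/- Let N = N₊ + N₋ with N₊, N₋ ≥ 1, let V be an invertible N×N complex matrix with blocks V₊₊, V₊₋, V₋₊, V₋₋ (V₊₊, V₋₋ invertible), let F₊₊ and F₋₋ be invertible diagonal matrices of sizes N₊ and N₋, set S = F₊₊V₊₊⁻¹V₊₋F₋₋⁻¹, T = F₋₋⁻¹V₋₋⁻¹V₋₊F₊₊, R⁻¹ = fromBlocks(I₊₊, S; T, I₋₋), E = diag(1,…,1,0,…,0) with N₊ ones, P = V E V⁻¹, and P_{N_β} = V R E R⁻¹ V⁻¹. Let a = ‖S‖ and b = ‖T‖, where ‖·‖ is the operator norm induced by the Euclidean norm on ℂᴺ. If a·b < 1 (so that R⁻¹ is invertible), then ‖P − P_{N_β}‖ ≤ ‖V‖·‖V⁻¹‖·(a + 2ab + b)/(1 − ab). -/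
open Matrix

/-- The operator norm of (the linear map associated with) a complex matrix, induced by the
Euclidean norms on the domain and codomain. -/
noncomputable def euclideanOpNorm {m n : Type*} [Fintype m] [Fintype n] [DecidableEq n]
    (A : Matrix m n ℂ) : ℝ :=
  ‖LinearMap.toContinuousLinearMap (Matrix.toEuclideanLin A)‖

open scoped Matrix.Norms.L2Operator

section L2OpNorm

variable {m n p q : Type*} [Fintype m] [Fintype n] [Fintype p] [Fintype q]
  [DecidableEq n]

theorem euclideanOpNorm_eq_l2_opNorm (A : Matrix m n ℂ) : euclideanOpNorm A = ‖A‖ := rfl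

theorem l2_opNorm_one_le : ‖(1 : Matrix n n ℂ)‖ ≤ 1 := by
  rw [← Matrix.diagonal_one, Matrix.l2_opNorm_diagonal]
  exact (pi_norm_le_iff_of_nonneg zero_le_one).2 fun i => by simp

theorem l2_opNorm_le_one_of_conjTranspose_mul_self {A : Matrix m n ℂ} (h : Aᴴ * A = 1) :
    ‖A‖ ≤ 1 := by
  have h1 := Matrix.l2_opNorm_conjTranspose_mul_self A
  rw [h] at h1
  nlinarith [l2_opNorm_one_le (n := n), norm_nonneg A]

theorem exists_inverse_one_sub_l2_opNorm_le {A : Matrix n n ℂ} {r : ℝ} (hA : ‖A‖ ≤ r)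
    (hr : r < 1) : ∃ B : Matrix n n ℂ, (1 - A) * B = 1 ∧ ‖B‖ ≤ 1 / (1 - r) := by
  have : CompleteSpace (Matrix n n ℂ) := FiniteDimensional.complete ℂ _
  obtain ⟨u, hu⟩ := isUnit_one_sub_of_norm_lt_one (hA.trans_lt hr)
  have hB : (1 - A) * (↑u⁻¹ : Matrix n n ℂ) = 1 := by rw [← hu]; exact u.mul_inv
  refine ⟨↑u⁻¹, hB, ?_⟩
  generalize (↑u⁻¹ : Matrix n n ℂ) = B at hB
  have h1 : B = 1 + A * B := by rw [← hB]; noncomm_ring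
  have h2 : ‖B‖ ≤ 1 + r * ‖B‖ := by
    calc ‖B‖ = ‖1 + A * B‖ := congrArg _ h1
      _ ≤ ‖(1 : Matrix n n ℂ)‖ + ‖A * B‖ := norm_add_le _ _
      _ ≤ 1 + r * ‖B‖ := add_le_add l2_opNorm_one_le
          ((norm_mul_le _ _).trans (by gcongr))
  rw [le_div_iff₀ (by linarith)]
  linarith

variable [DecidableEq m]

theorem l2_opNorm_isometry_conj_le [DecidableEq q] {J : Matrix p m ℂ} {K : Matrix q n ℂ} (hJ : Jᴴ * J = 1)
    (hK : Kᴴ * K = 1) (A : Matrix m n ℂ) : ‖J * A * Kᴴ‖ ≤ ‖A‖ := by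
  have hJ1 := l2_opNorm_le_one_of_conjTranspose_mul_self hJ
  have hK1 := l2_opNorm_le_one_of_conjTranspose_mul_self hK
  calc ‖J * A * Kᴴ‖ ≤ ‖J * A‖ * ‖Kᴴ‖ := Matrix.l2_opNorm_mul _ _
    _ ≤ ‖J‖ * ‖A‖ * ‖Kᴴ‖ := by gcongr; exact Matrix.l2_opNorm_mul _ _
    _ ≤ 1 * ‖A‖ * 1 := by rw [Matrix.l2_opNorm_conjTranspose]; gcongr
    _ = ‖A‖ := by ring

theorem conjTranspose_mul_self_fromRows_one_zero {m n : Type*} [Fintype m] [Fintype n]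
    [DecidableEq m] :
    (Matrix.fromRows 1 0 : Matrix (m ⊕ n) m ℂ)ᴴ * (Matrix.fromRows 1 0 : Matrix (m ⊕ n) m ℂ) = 1 := by
  simp [Matrix.conjTranspose_fromRows_eq_fromCols_conjTranspose, Matrix.fromCols_mul_fromRows]

theorem conjTranspose_mul_self_fromRows_zero_one {m n : Type*} [Fintype m] [Fintype n]
    [DecidableEq n] :
    (Matrix.fromRows 0 1 : Matrix (m ⊕ n) n ℂ)ᴴ * (Matrix.fromRows 0 1 : Matrix (m ⊕ n) n ℂ) = 1 := by
  simp [Matrix.conjTranspose_fromRows_eq_fromCols_conjTranspose, Matrix.fromCols_mul_fromRows]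

theorem l2_opNorm_fromBlocks_le [DecidableEq p] [DecidableEq q] (A : Matrix m p ℂ)
    (B : Matrix m q ℂ) (C : Matrix n p ℂ) (D : Matrix n q ℂ) :
    ‖Matrix.fromBlocks A B C D‖ ≤ ‖A‖ + ‖B‖ + ‖C‖ + ‖D‖ := by
  let J₁ : Matrix (m ⊕ n) m ℂ := Matrix.fromRows 1 0
  let J₂ : Matrix (m ⊕ n) n ℂ := Matrix.fromRows 0 1
  let K₁ : Matrix (p ⊕ q) p ℂ := Matrix.fromRows 1 0
  let K₂ : Matrix (p ⊕ q) q ℂ := Matrix.fromRows 0 1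
  have hJ₁ : J₁ᴴ * J₁ = 1 := conjTranspose_mul_self_fromRows_one_zero
  have hJ₂ : J₂ᴴ * J₂ = 1 := conjTranspose_mul_self_fromRows_zero_one
  have hK₁ : K₁ᴴ * K₁ = 1 := conjTranspose_mul_self_fromRows_one_zero
  have hK₂ : K₂ᴴ * K₂ = 1 := conjTranspose_mul_self_fromRows_zero_one
  have h : Matrix.fromBlocks A B C D
      = J₁ * A * K₁ᴴ + J₁ * B * K₂ᴴ + J₂ * C * K₁ᴴ + J₂ * D * K₂ᴴ := by
    ext (i | i) (j | j) <;>
      simp [J₁, J₂, K₁, K₂, Matrix.conjTranspose_fromRows_eq_fromCols_conjTranspose,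
        Matrix.fromRows_mul]
  rw [h]
  exact norm_add₄_le.trans (add_le_add (add_le_add (add_le_add
    (l2_opNorm_isometry_conj_le hJ₁ hK₁ A) (l2_opNorm_isometry_conj_le hJ₁ hK₂ B))
    (l2_opNorm_isometry_conj_le hJ₂ hK₁ C)) (l2_opNorm_isometry_conj_le hJ₂ hK₂ D))

end L2OpNorm

section BlockInverse

variable {m n : Type*} [Fintype m] [Fintype n] [DecidableEq m] [DecidableEq n]

theorem inv_fromBlocks_one_one {S : Matrix m n ℂ} {T : Matrix n m ℂ} {B : Matrix m m ℂ}
    (hB : (1 - S * T) * B = 1) :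
    (Matrix.fromBlocks 1 S T 1)⁻¹ = Matrix.fromBlocks B (-(B * S)) (-(T * B)) (1 + T * B * S) := by
  apply Matrix.inv_eq_right_inv
  have h : B = 1 + S * (T * B) := by
    rw [← hB, Matrix.sub_mul, Matrix.one_mul, Matrix.mul_assoc]; abel
  have hS : B * S = S + S * (T * (B * S)) := by
    conv_lhs => rw [h]
    simp only [Matrix.add_mul, Matrix.one_mul, Matrix.mul_assoc]
  rw [Matrix.fromBlocks_multiply, ← Matrix.fromBlocks_one]
  congr 1
  · rw [Matrix.one_mul, Matrix.mul_neg]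
    nth_rewrite 1 [h]
    abel
  · simp only [Matrix.one_mul, Matrix.mul_add, Matrix.mul_one, Matrix.mul_assoc]
    nth_rewrite 1 [hS]
    abel
  · simp
  · simp [Matrix.mul_assoc]

/-- The difference of the coordinate projection and its conjugate by `fromBlocks 1 S T 1`. -/
theorem coordProj_sub_conj {S : Matrix m n ℂ} {T : Matrix n m ℂ} {B : Matrix m m ℂ}
    (hB : (1 - S * T) * B = 1) :
    Matrix.fromBlocks 1 0 0 0
        - (Matrix.fromBlocks 1 S T 1)⁻¹ * Matrix.fromBlocks 1 0 0 0 * Matrix.fromBlocks 1 S T 1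
      = Matrix.fromBlocks (-(S * T * B)) (-(B * S)) (T * B) (T * B * S) := by
  have h : 1 - B = -(S * T * B) := by
    rw [← hB, Matrix.sub_mul, Matrix.one_mul]; abel
  rw [inv_fromBlocks_one_one hB, ← h]
  simp [Matrix.fromBlocks_multiply, sub_eq_add_neg, Matrix.fromBlocks_neg, Matrix.fromBlocks_add]

theorem l2_opNorm_coordProj_sub_conj_le {S : Matrix m n ℂ} {T : Matrix n m ℂ}
    (hST : ‖S‖ * ‖T‖ < 1) :
    ‖Matrix.fromBlocks 1 0 0 0
        - (Matrix.fromBlocks 1 S T 1)⁻¹ * Matrix.fromBlocks 1 0 0 0 * Matrix.fromBlocks 1 S T 1‖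
      ≤ (‖S‖ + 2 * ‖S‖ * ‖T‖ + ‖T‖) / (1 - ‖S‖ * ‖T‖) := by
  obtain ⟨B, hB, hBn⟩ := exists_inverse_one_sub_l2_opNorm_le (Matrix.l2_opNorm_mul S T) hST
  rw [coordProj_sub_conj hB]
  have hSTB : ‖S * T * B‖ ≤ ‖S‖ * ‖T‖ * ‖B‖ :=
    (Matrix.l2_opNorm_mul _ _).trans (by gcongr; exact Matrix.l2_opNorm_mul _ _)
  have hTBS : ‖T * B * S‖ ≤ ‖T‖ * ‖B‖ * ‖S‖ :=
    (Matrix.l2_opNorm_mul _ _).trans (by gcongr; exact Matrix.l2_opNorm_mul _ _)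
  calc _ ≤ ‖-(S * T * B)‖ + ‖-(B * S)‖ + ‖T * B‖ + ‖T * B * S‖ := l2_opNorm_fromBlocks_le _ _ _ _
    _ ≤ ‖S‖ * ‖T‖ * ‖B‖ + ‖B‖ * ‖S‖ + ‖T‖ * ‖B‖ + ‖T‖ * ‖B‖ * ‖S‖ := by
      rw [norm_neg, norm_neg]
      gcongr <;> exact Matrix.l2_opNorm_mul _ _
    _ = (‖S‖ + 2 * ‖S‖ * ‖T‖ + ‖T‖) * ‖B‖ := by ring
    _ ≤ (‖S‖ + 2 * ‖S‖ * ‖T‖ + ‖T‖) * (1 / (1 - ‖S‖ * ‖T‖)) := by gcongr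
    _ = _ := mul_one_div _ _

end BlockInverse

/-- Quantitative OWNS-P error bound: with `S = F₊₊V₊₊⁻¹V₊₋F₋₋⁻¹`,
`T = F₋₋⁻¹V₋₋⁻¹V₋₊F₊₊`, `R⁻¹ = fromBlocks(I, S; T, I)`, `a = ‖S‖`, `b = ‖T‖` and `a·b < 1`,
the exact projection `P = V E V⁻¹` and the OWNS-P approximation `P_{N_β} = V R E R⁻¹ V⁻¹`
satisfy `‖P − P_{N_β}‖ ≤ ‖V‖‖V⁻¹‖(a + 2ab + b)/(1 − ab)`. -/
theorem ownsP_error_bound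
    (np nm : ℕ) (hnp : 1 ≤ np) (hnm : 1 ≤ nm)
    (V : Matrix (Fin np ⊕ Fin nm) (Fin np ⊕ Fin nm) ℂ) (hV : IsUnit V.det)
    (hVpp : IsUnit (V.toBlocks₁₁).det) (hVmm : IsUnit (V.toBlocks₂₂).det)
    (fpp : Fin np → ℂ) (hfpp : ∀ i, fpp i ≠ 0)
    (fmm : Fin nm → ℂ) (hfmm : ∀ i, fmm i ≠ 0)
    (Fpp : Matrix (Fin np) (Fin np) ℂ) (hFpp : Fpp = Matrix.diagonal fpp)
    (Fmm : Matrix (Fin nm) (Fin nm) ℂ) (hFmm : Fmm = Matrix.diagonal fmm)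
    (S : Matrix (Fin np) (Fin nm) ℂ) (hS : S = Fpp * (V.toBlocks₁₁)⁻¹ * V.toBlocks₁₂ * Fmm⁻¹)
    (T : Matrix (Fin nm) (Fin np) ℂ) (hT : T = Fmm⁻¹ * (V.toBlocks₂₂)⁻¹ * V.toBlocks₂₁ * Fpp)
    (Rinv : Matrix (Fin np ⊕ Fin nm) (Fin np ⊕ Fin nm) ℂ)
    (hRinv : Rinv = Matrix.fromBlocks 1 S T 1)
    (E : Matrix (Fin np ⊕ Fin nm) (Fin np ⊕ Fin nm) ℂ)
    (hE : E = Matrix.fromBlocks (1 : Matrix (Fin np) (Fin np) ℂ) 0 0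
      (0 : Matrix (Fin nm) (Fin nm) ℂ))
    (P : Matrix (Fin np ⊕ Fin nm) (Fin np ⊕ Fin nm) ℂ) (hP : P = V * E * V⁻¹)
    (PNβ : Matrix (Fin np ⊕ Fin nm) (Fin np ⊕ Fin nm) ℂ)
    (hPNβ : PNβ = V * Rinv⁻¹ * E * Rinv * V⁻¹)
    (a b : ℝ) (ha : a = euclideanOpNorm S) (hb : b = euclideanOpNorm T)
    (hab : a * b < 1) :
    euclideanOpNorm (P - PNβ) ≤
      euclideanOpNorm V * euclideanOpNorm V⁻¹ * ((a + 2 * a * b + b) / (1 - a * b)) := by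
  simp only [euclideanOpNorm_eq_l2_opNorm] at *
  subst ha hb
  have hdiff : P - PNβ = V * (E - Rinv⁻¹ * E * Rinv) * V⁻¹ := by
    rw [hP, hPNβ]; noncomm_ring
  have hbound := l2_opNorm_coordProj_sub_conj_le hab
  rw [← hRinv, ← hE] at hbound
  calc ‖P - PNβ‖ ≤ ‖V‖ * ‖E - Rinv⁻¹ * E * Rinv‖ * ‖V⁻¹‖ := by
        rw [hdiff]
        exact (norm_mul_le _ _).trans (by gcongr; exact norm_mul_le _ _)
    _ ≤ ‖V‖ * ((‖S‖ + 2 * ‖S‖ * ‖T‖ + ‖T‖) / (1 - ‖S‖ * ‖T‖)) * ‖V⁻¹‖ := by gcongr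
    _ = _ := by ring
end

section
/- Let N = N₊ + N₋ with N₊, N₋ ≥ 1, α₁,…,α_N ∈ ℂ with α_m ≠ α_n for every downstream m (1 ≤ m ≤ N₊) and upstream n (N₊+1 ≤ n ≤ N), D = diag(iα₁,…,iα_N), V invertible with M = V D V⁻¹, and let R⁻¹ = fromBlocks(I₊₊, S; T, I₋₋) be invertible, where S is any N₊×N₋ and T any N₋×N₊ complex matrix. With E = diag(1,…,1,0,…,0) (N₊ ones) and P_{N_β} = V R E R⁻¹ V⁻¹, the matrix P_{N_β} commutes with M if and only if R⁻¹ = I (equivalently S = 0 and T = 0). -/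
open Matrix

/-- A matrix commuting with a diagonal matrix vanishes at every entry whose two diagonal values
differ. -/
theorem Matrix.apply_eq_zero_of_commute_diagonal {n K : Type*} [Fintype n] [DecidableEq n]
    [CommRing K] [NoZeroDivisors K] {Q : Matrix n n K} {d : n → K}
    (h : Commute Q (diagonal d)) {i j : n} (hij : d i ≠ d j) : Q i j = 0 := by
  have hentry := congrFun (congrFun h.eq i) j
  rw [mul_diagonal, diagonal_mul] at hentry
  have hprod : (d i - d j) * Q i j = 0 := by linear_combination -hentry
  exact (mul_eq_zero.mp hprod).resolve_left (sub_ne_zero.mpr hij)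

/-- Conjugation by an invertible matrix preserves and reflects commutation. -/
theorem Matrix.commute_conj_iff {n K : Type*} [Fintype n] [DecidableEq n] [CommRing K]
    {V : Matrix n n K} (hV : IsUnit V.det) (A B : Matrix n n K) :
    Commute (V * A * V⁻¹) (V * B * V⁻¹) ↔ Commute A B := by
  have hconj (X Y : Matrix n n K) : V * X * V⁻¹ * (V * Y * V⁻¹) = V * (X * Y) * V⁻¹ := by
    simp only [Matrix.mul_assoc, nonsing_inv_mul_cancel_left _ _ hV]
  have hV' : IsUnit V := (isUnit_iff_isUnit_det V).mpr hV
  have hVi : IsUnit V⁻¹ := (isUnit_nonsing_inv_iff).mpr hV'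
  rw [commute_iff_eq, commute_iff_eq, hconj, hconj, hVi.mul_left_inj, hV'.mul_right_inj]

/-- If a block diagonal matrix is intertwined with the coordinate projection by
`fromBlocks 1 S T 1`, then the off-diagonal blocks `S` and `T` vanish. -/
theorem Matrix.offDiag_eq_zero_of_intertwines {m n K : Type*} [Fintype m] [DecidableEq m]
    [Fintype n] [DecidableEq n] [CommRing K] {S : Matrix m n K} {T : Matrix n m K}
    {A : Matrix m m K} {B : Matrix n n K}
    (h : fromBlocks 1 S T 1 * fromBlocks A 0 0 B = fromBlocks 1 0 0 0 * fromBlocks 1 S T 1) :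
    S = 0 ∧ T = 0 := by
  simp only [fromBlocks_multiply, fromBlocks_inj, Matrix.one_mul, Matrix.mul_zero,
    Matrix.zero_mul, add_zero, zero_add] at h
  obtain ⟨rfl, hS, hT, rfl⟩ := h
  exact ⟨by simpa using hS.symm, by simpa using hT⟩

/-- The OWNS-P approximate projection `P_{N_β} = V R E R⁻¹ V⁻¹`, with
`R⁻¹ = fromBlocks(I, S; T, I)` invertible and distinct downstream/upstream eigenvalues,
commutes with `M = V D V⁻¹` if and only if `R⁻¹ = I`. -/
theorem ownsP_commutes_iff_converged
    (np nm : ℕ) (hnp : 1 ≤ np) (hnm : 1 ≤ nm)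
    (α : Fin np ⊕ Fin nm → ℂ)
    (hsep : ∀ (m : Fin np) (n : Fin nm), α (Sum.inl m) ≠ α (Sum.inr n))
    (D : Matrix (Fin np ⊕ Fin nm) (Fin np ⊕ Fin nm) ℂ)
    (hD : D = Matrix.diagonal (fun k => Complex.I * α k))
    (V : Matrix (Fin np ⊕ Fin nm) (Fin np ⊕ Fin nm) ℂ) (hV : IsUnit V.det)
    (M : Matrix (Fin np ⊕ Fin nm) (Fin np ⊕ Fin nm) ℂ) (hM : M = V * D * V⁻¹)
    (S : Matrix (Fin np) (Fin nm) ℂ) (T : Matrix (Fin nm) (Fin np) ℂ)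
    (Rinv : Matrix (Fin np ⊕ Fin nm) (Fin np ⊕ Fin nm) ℂ)
    (hRinv : Rinv = Matrix.fromBlocks 1 S T 1)
    (hRunit : IsUnit Rinv.det)
    (E : Matrix (Fin np ⊕ Fin nm) (Fin np ⊕ Fin nm) ℂ)
    (hE : E = Matrix.fromBlocks (1 : Matrix (Fin np) (Fin np) ℂ) 0 0
      (0 : Matrix (Fin nm) (Fin nm) ℂ))
    (P : Matrix (Fin np ⊕ Fin nm) (Fin np ⊕ Fin nm) ℂ)
    (hP : P = V * Rinv⁻¹ * E * Rinv * V⁻¹) :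
    P * M = M * P ↔ Rinv = 1 := by
  subst hM hP hD
  rw [show V * Rinv⁻¹ * E * Rinv * V⁻¹ = V * (Rinv⁻¹ * E * Rinv) * V⁻¹ by
    simp only [Matrix.mul_assoc], ← commute_iff_eq, commute_conj_iff hV]
  constructor
  · intro h
    set Q := Rinv⁻¹ * E * Rinv with hQ
    have hne (m : Fin np) (n : Fin nm) :
        Complex.I * α (Sum.inl m) ≠ Complex.I * α (Sum.inr n) :=
      fun heq => hsep m n (mul_left_cancel₀ Complex.I_ne_zero heq)
    have h12 : Q.toBlocks₁₂ = 0 := by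
      ext m n
      exact apply_eq_zero_of_commute_diagonal h (hne m n)
    have h21 : Q.toBlocks₂₁ = 0 := by
      ext n m
      exact apply_eq_zero_of_commute_diagonal h (hne m n).symm
    have hint : Rinv * Q = E * Rinv := by
      rw [hQ, Matrix.mul_assoc, mul_nonsing_inv_cancel_left _ _ hRunit]
    rw [← fromBlocks_toBlocks Q, h12, h21, hRinv, hE] at hint
    obtain ⟨rfl, rfl⟩ := offDiag_eq_zero_of_intertwines hint
    rw [hRinv, fromBlocks_one]
  · intro h
    have hEdiag : E = diagonal (Sum.elim 1 0) := by
      rw [hE, ← fromBlocks_diagonal]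
      simp
    rw [h, inv_one, Matrix.one_mul, Matrix.mul_one, hEdiag]
    exact commute_diagonal _ _
end

section
/- Let N = N₊ + N₋ with 1 ≤ N₊ ≤ N₋ and α₁,…,α_N ∈ ℂ, with downstream indices 1,…,N₊ and upstream indices N₊+1,…,N. Take the minimal OWNS-P parameter set: N_β = N₊, β₊ʲ = α_{j+1} for j = 0,…,N₊−1, and β₋⁰,…,β₋^{N₊−1} with β₋ʲ ≠ α_k for all k; let c ∈ ℂ, c ≠ 0, and suppose for every upstream index k the denominator ∏_j(α_k−β₋ʲ) + c∏_j(α_k−β₊ʲ) is nonzero. Then for every upstream index k the OWNS-R approximate eigenvalue E⁽ᵏ⁾ = ∏_j(α_k−β₋ʲ) / (∏_j(α_k−β₋ʲ) + c∏_j(α_k−β₊ʲ)) is nonzero; consequently, for any invertible V, the OWNS-R matrix P^{(R)} = V diag(E⁽¹⁾,…,E⁽ᴺ⁾) V⁻¹ is not equal to the exact projection P = V E V⁻¹, even though the same parameters make the OWNS-P approximation exact. -/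
open Matrix

/-- The minimal OWNS-P parameter set (`N_β = N₊`, `β₊ʲ` the downstream
eigenvalues, `β₋ʲ` avoiding all eigenvalues) does not make OWNS-R exact: every upstream
approximate eigenvalue `E⁽ᵏ⁾` is nonzero, hence `P^{(R)} = V diag(E⁽ᵏ⁾) V⁻¹` differs from
the exact projection `P = V E V⁻¹` for every invertible `V`. -/
theorem ownsR_not_exact_with_minimal_ownsP_parameters
    (np nm : ℕ) (hnp : 1 ≤ np) (hnpm : np ≤ nm)
    (α : Fin np ⊕ Fin nm → ℂ)
    (βp βm : Fin np → ℂ)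
    (hβp : ∀ j : Fin np, βp j = α (Sum.inl j))
    (hβm : ∀ (j : Fin np) (k : Fin np ⊕ Fin nm), βm j ≠ α k)
    (c : ℂ) (hc : c ≠ 0)
    (hden : ∀ k : Fin nm,
      (∏ j : Fin np, (α (Sum.inr k) - βm j)) +
        c * ∏ j : Fin np, (α (Sum.inr k) - βp j) ≠ 0) :
    let Ev : Fin np ⊕ Fin nm → ℂ := fun k =>
      (∏ j : Fin np, (α k - βm j)) /
        ((∏ j : Fin np, (α k - βm j)) + c * ∏ j : Fin np, (α k - βp j))
    (∀ k : Fin nm, Ev (Sum.inr k) ≠ 0) ∧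
    (∀ V : Matrix (Fin np ⊕ Fin nm) (Fin np ⊕ Fin nm) ℂ, IsUnit V.det →
      V * Matrix.diagonal Ev * V⁻¹ ≠
        V * Matrix.fromBlocks (1 : Matrix (Fin np) (Fin np) ℂ) 0 0
          (0 : Matrix (Fin nm) (Fin nm) ℂ) * V⁻¹) := by
  intro Ev
  have hEv : ∀ k : Fin nm, Ev (Sum.inr k) ≠ 0 := fun k =>
    div_ne_zero (Finset.prod_ne_zero_iff.mpr fun j _ => sub_ne_zero.mpr (hβm j _).symm) (hden k)
  refine ⟨hEv, fun V hV h => ?_⟩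
  have hdiag : Matrix.diagonal Ev = Matrix.fromBlocks 1 0 0 0 := by
    have hconj := congrArg (fun M => V⁻¹ * (M * V)) h
    simpa only [Matrix.nonsing_inv_mul_cancel_right _ _ hV, Matrix.nonsing_inv_mul_cancel_left _ _ hV]
      using hconj
  let k : Fin nm := ⟨0, by omega⟩
  apply hEv k
  simpa using congrFun (congrFun hdiag (Sum.inr k)) (Sum.inr k)
end

section
/- Let α₁,…,α_N ∈ ℂ, D = diag(iα₁,…,iα_N), V an invertible N×N complex matrix, M = V D V⁻¹, and β₊¹,…,β₊^{N_β}, β₋¹,…,β₋^{N_β}, β_*¹,…,β_*^{N_β} ∈ ℂ such that α_k ≠ β₋ʲ and α_k ≠ β_*ʲ for all k, j, and such that the polynomial identity 2∏_{j=1}^{N_β}(z−β_*ʲ) = ∏_{j=1}^{N_β}(z−β₋ʲ) + ∏_{j=1}^{N_β}(z−β₊ʲ) holds at z = α_k for every k. Set Z = ∏_{j=1}^{N_β}(M − iβ₊ʲI)(M − iβ₋ʲI)⁻¹ and assume I + Z is invertible. Then (I + Z)⁻¹ = (1/2)·∏_{j=1}^{N_β}(M − iβ_*ʲI)⁻¹(M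 − iβ₋ʲI). -/
open Matrix

/-- The algebra homomorphism `f ↦ V * diagonal f * V⁻¹` attached to an invertible matrix `V`. -/
noncomputable def conjDiagonalAlgHom {n : Type*} [Fintype n] [DecidableEq n]
    (V : Matrix n n ℂ) (hV : IsUnit V.det) : (n → ℂ) →ₐ[ℂ] Matrix n n ℂ :=
  AlgHom.ofLinearMap
    { toFun := fun f => V * Matrix.diagonal f * V⁻¹
      map_add' := fun f g => by
        rw [← Matrix.add_mul, ← Matrix.mul_add, Matrix.diagonal_add]
        rfl
      map_smul' := fun c f => by
        simp [Matrix.diagonal_smul] }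
    (by simp [Matrix.mul_nonsing_inv V hV])
    (fun f g => by
      simp only [LinearMap.coe_mk, AddHom.coe_mk]
      calc V * Matrix.diagonal (f * g) * V⁻¹
          = V * (Matrix.diagonal f * Matrix.diagonal g) * V⁻¹ := by
            rw [Matrix.diagonal_mul_diagonal]; rfl
        _ = V * Matrix.diagonal f * (V⁻¹ * V) * Matrix.diagonal g * V⁻¹ := by
            rw [Matrix.nonsing_inv_mul V hV]; simp only [Matrix.mul_one, Matrix.mul_assoc]
        _ = V * Matrix.diagonal f * V⁻¹ * (V * Matrix.diagonal g * V⁻¹) := by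
            simp only [Matrix.mul_assoc])

/-- An algebra homomorphism from functions to matrices sends pointwise inverses of nowhere
vanishing functions to matrix inverses. -/
theorem inv_algHom_apply_of_ne_zero {m n : Type*} [Fintype n] [DecidableEq n]
    (φ : (m → ℂ) →ₐ[ℂ] Matrix n n ℂ) {f : m → ℂ} (hf : ∀ k, f k ≠ 0) :
    (φ f)⁻¹ = φ f⁻¹ := by
  apply Matrix.inv_eq_right_inv
  rw [← map_mul, ← map_one φ]
  congr 1
  ext k
  simp [hf k]

/-- Practical implementation of OWNS-R: if the shifts `β_*ʲ` satisfy the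
polynomial identity `2∏_j(z−β_*ʲ) = ∏_j(z−β₋ʲ) + ∏_j(z−β₊ʲ)` at every eigenvalue `z = α_k`,
and `Z = ∏_j (M − iβ₊ʲI)(M − iβ₋ʲI)⁻¹` with `I + Z` invertible, then
`(I + Z)⁻¹ = (1/2)·∏_j (M − iβ_*ʲI)⁻¹(M − iβ₋ʲI)`. -/
theorem ownsR_practical_implementation
    (N : ℕ) (α : Fin N → ℂ)
    (D : Matrix (Fin N) (Fin N) ℂ) (hD : D = Matrix.diagonal (fun k => Complex.I * α k))
    (V : Matrix (Fin N) (Fin N) ℂ) (hV : IsUnit V.det)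
    (M : Matrix (Fin N) (Fin N) ℂ) (hM : M = V * D * V⁻¹)
    (Nβ : ℕ) (βp βm βs : Fin Nβ → ℂ)
    (hne : ∀ (k : Fin N) (j : Fin Nβ), α k ≠ βm j ∧ α k ≠ βs j)
    (hpoly : ∀ k : Fin N,
      2 * ∏ j : Fin Nβ, (α k - βs j) =
        (∏ j : Fin Nβ, (α k - βm j)) + ∏ j : Fin Nβ, (α k - βp j))
    (Z : Matrix (Fin N) (Fin N) ℂ)
    (hZ : Z = ((List.finRange Nβ).map (fun j =>
      (M - (Complex.I * βp j) • 1) * (M - (Complex.I * βm j) • 1)⁻¹)).prod)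
    (hunit : IsUnit (1 + Z)) :
    (1 + Z)⁻¹ = (2 : ℂ)⁻¹ • ((List.finRange Nβ).map (fun j =>
      (M - (Complex.I * βs j) • 1)⁻¹ * (M - (Complex.I * βm j) • 1))).prod := by
  obtain ⟨φ, hφ⟩ : ∃ φ : (Fin N → ℂ) →ₐ[ℂ] Matrix (Fin N) (Fin N) ℂ,
      M = φ (fun k => Complex.I * α k) :=
    ⟨conjDiagonalAlgHom V hV, by rw [hM, hD]; rfl⟩
  have hshift (b : ℂ) :
      M - (Complex.I * b) • 1 = φ (fun k => Complex.I * (α k - b)) := by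
    rw [hφ, ← map_one φ, ← map_smul, ← map_sub]
    congr 1
    ext k
    simp [mul_sub]
  have hinv (b : ℂ) (hb : ∀ k, α k ≠ b) :
      (φ (fun k => Complex.I * (α k - b)))⁻¹ = φ (fun k => Complex.I * (α k - b))⁻¹ := by
    apply inv_algHom_apply_of_ne_zero
    exact fun k => mul_ne_zero Complex.I_ne_zero (sub_ne_zero.mpr (hb k))
  have hZφ : Z = φ (fun k => (∏ j, (α k - βp j)) / ∏ j, (α k - βm j)) := by
    simp only [hZ, hshift, fun j => hinv (βm j) fun k => (hne k j).1, ← map_mul]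
    rw [← Function.comp_def φ, ← List.map_map, ← map_list_prod, ← List.ofFn_eq_map,
      List.prod_ofFn]
    congr 1
    ext k
    simp [Finset.prod_apply, ← Finset.prod_div_distrib, ← div_eq_mul_inv, mul_div_mul_left]
  have hR : ((List.finRange Nβ).map (fun j =>
      (M - (Complex.I * βs j) • 1)⁻¹ * (M - (Complex.I * βm j) • 1))).prod =
      φ (fun k => (∏ j, (α k - βm j)) / ∏ j, (α k - βs j)) := by
    simp only [fun j => hinv (βs j) fun k => (hne k j).2, ← map_mul, hshift]
    rw [← Function.comp_def φ, ← List.map_map, ← map_list_prod, ← List.ofFn_eq_map,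
      List.prod_ofFn]
    congr 1
    ext k
    simp only [Finset.prod_apply, ← Finset.prod_div_distrib, Pi.mul_apply, Pi.inv_apply]
    refine Finset.prod_congr rfl fun j _ => ?_
    rw [mul_comm, ← div_eq_mul_inv, mul_div_mul_left _ _ Complex.I_ne_zero]
  apply Matrix.inv_eq_right_inv
  rw [hR, hZφ, ← map_one φ, ← map_add, ← map_smul, ← map_mul]
  congr 1
  ext k
  have hm : ∏ j, (α k - βm j) ≠ 0 :=
    Finset.prod_ne_zero_iff.mpr fun j _ => sub_ne_zero.mpr (hne k j).1
  have hs : ∏ j, (α k - βs j) ≠ 0 :=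
    Finset.prod_ne_zero_iff.mpr fun j _ => sub_ne_zero.mpr (hne k j).2
  simp only [Pi.mul_apply, Pi.add_apply, Pi.one_apply, Pi.smul_apply, smul_eq_mul]
  field_simp
  exact (hpoly k).symm
end
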